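/- Let δ ≥ 2 and let Γ = {a, h, t, x} be a four-element set. Let B₁ be the set of multisets of size δ over Γ of one of the two forms: one a and δ−1 x's; one h, one t, and δ−2 x's. Set A = {x}, H = {h,x}, T = {t,x}, X = {a,h,t,x}. Then for every δ-tuple (S₁,…,S_δ) with each S_i ∈ {A, H, T, X}, there exist x₁ ∈ S₁, …, x_δ ∈ S_δ with the multiset {x₁,…,x_δ} ∈ B₁ if and only if some S_i equals X, or there are indices i ≠ j with S_i = H and S_j = T. -/

import Mathlib

/-- The four-letter alphabet `Γ = {a, h, t, x}`. -/
inductive Gam : Type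
  | a | h | t | x
deriving DecidableEq

instance : Fintype Gam where
  elems := {Gam.a, Gam.h, Gam.t, Gam.x}
  complete := by intro g; cases g <;> simp

/-- The multiset of values of a tuple. -/
def tupleMultiset {n : ℕ} (f : Fin n → Gam) : Multiset Gam :=
  (Finset.univ : Finset (Fin n)).val.map f

/-- Membership in the black constraint `B₁`: the multiset consists of one `a` and `δ-1`
`x`'s, or of one `h`, one `t`, and `δ-2` `x`'s. -/
def InB1 (δ : ℕ) (m : Multiset Gam) : Prop :=
  m = Gam.a ::ₘ Multiset.replicate (δ - 1) Gam.x ∨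
  m = Gam.h ::ₘ Gam.t ::ₘ Multiset.replicate (δ - 2) Gam.x

/-- With `A = {x}`, `H = {h,x}`, `T = {t,x}`, `X = Γ`: a `δ`-tuple of sets,
each among `A, H, T, X`, admits a choice forming a multiset in `B₁` iff some coordinate is
`X`, or there are two distinct coordinates, one equal to `H` and one equal to `T`. -/
theorem stmt_15 (δ : ℕ) (hδ : 2 ≤ δ)
    (S : Fin δ → Set Gam)
    (hS : ∀ i, S i = ({Gam.x} : Set Gam) ∨ S i = ({Gam.h, Gam.x} : Set Gam) ∨
      S i = ({Gam.t, Gam.x} : Set Gam) ∨ S i = Set.univ) :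
    (∃ f : Fin δ → Gam, (∀ i, f i ∈ S i) ∧ InB1 δ (tupleMultiset f)) ↔
    ((∃ i, S i = Set.univ) ∨
     (∃ i j : Fin δ, i ≠ j ∧ S i = ({Gam.h, Gam.x} : Set Gam) ∧
       S j = ({Gam.t, Gam.x} : Set Gam))) := by
  have hx : ∀ i, Gam.x ∈ S i := by
    intro i
    rcases hS i with h | h | h | h <;> simp [h]
  constructor
  · rintro ⟨f, hf, hB⟩
    have key : ∀ g, g ∈ tupleMultiset f → ∃ i, f i = g := by
      intro g hg
      simpa [tupleMultiset] using hg
    rcases hB with h | h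
    · obtain ⟨i, hi⟩ := key Gam.a (by rw [h]; simp)
      left
      refine ⟨i, ?_⟩
      have := hf i
      rw [hi] at this
      rcases hS i with h | h | h | h
      · simp [h] at this
      · simp [h] at this
      · simp [h] at this
      · exact h
    · obtain ⟨i, hi⟩ := key Gam.h (by rw [h]; simp)
      obtain ⟨j, hj⟩ := key Gam.t (by rw [h]; simp)
      have h1 := hf i
      rw [hi] at h1
      have h2 := hf j
      rw [hj] at h2
      have hij : i ≠ j := by
        rintro rfl
        rw [hi] at hj
        cases hj
      have hi' : S i = ({Gam.h, Gam.x} : Set Gam) ∨ S i = Set.univ := by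
        rcases hS i with h | h | h | h
        · simp [h] at h1
        · exact Or.inl h
        · simp [h] at h1
        · exact Or.inr h
      have hj' : S j = ({Gam.t, Gam.x} : Set Gam) ∨ S j = Set.univ := by
        rcases hS j with h | h | h | h
        · simp [h] at h2
        · simp [h] at h2
        · exact Or.inl h
        · exact Or.inr h
      rcases hi' with hi' | hi'
      · rcases hj' with hj' | hj'
        · exact Or.inr ⟨i, j, hij, hi', hj'⟩
        · exact Or.inl ⟨j, hj'⟩
      · exact Or.inl ⟨i, hi'⟩
  · rintro (⟨i, hi⟩ | ⟨i, j, hij, hi, hj⟩)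
    · refine ⟨fun k => if k = i then Gam.a else Gam.x, ?_, Or.inl ?_⟩
      · intro k
        by_cases hk : k = i
        · subst hk; simp [hi]
        · simp [hk, hx]
      · have hu : (Finset.univ : Finset (Fin δ)) =
            Finset.cons i (Finset.univ.erase i) (by simp) := by
          simp
        unfold tupleMultiset
        rw [hu, Finset.cons_val, Multiset.map_cons]
        congr 1
        · simp
        · rw [Multiset.eq_replicate]
          constructor
          · rw [Multiset.card_map, Finset.card_val, Finset.card_erase_of_mem (by simp)]
            simp
          · intro b hb
            simp only [Multiset.mem_map, Finset.mem_val, Finset.mem_erase] at hb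
            obtain ⟨k, ⟨hk, -⟩, rfl⟩ := hb
            simp [hk]
    · refine ⟨fun k => if k = i then Gam.h else if k = j then Gam.t else Gam.x, ?_, Or.inr ?_⟩
      · intro k
        by_cases hk : k = i
        · subst hk; simp [hi]
        · by_cases hk' : k = j
          · subst hk'; simp [hk, hj]
          · simp [hk, hk', hx]
      · have hu : (Finset.univ : Finset (Fin δ)) =
            Finset.cons i (Finset.cons j ((Finset.univ.erase i).erase j) (by simp))
              (by simp [hij]) := by
          ext k
          simp
          tauto
        unfold tupleMultiset
        rw [hu, Finset.cons_val, Multiset.map_cons, Finset.cons_val, Multiset.map_cons]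
        congr 1
        · simp
        congr 1
        · simp [hij.symm]
        · rw [Multiset.eq_replicate]
          constructor
          · rw [Multiset.card_map, Finset.card_val,
              Finset.card_erase_of_mem (by simp [hij.symm]), Finset.card_erase_of_mem (by simp)]
            simp
            omega
          · intro b hb
            simp only [Multiset.mem_map, Finset.mem_val, Finset.mem_erase] at hb
            obtain ⟨k, ⟨hk', hk, -⟩, rfl⟩ := hb
            simp [hk, hk']
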